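/- Let (λ_2, λ_3, ..., λ_n) be a list of complex numbers, closed under complex conjugation, with Re(λ_i) ≤ 0 for all i, let ρ ≥ 0 be real, and let f(x) := (x - ρ)·∏_{i=2}^n (x - λ_i) = x^n + a_1 x^{n-1} + a_2 x^{n-2} + ... + a_n (a real polynomial). If a_1 ≤ 0 and a_2 ≤ 0, then a_i ≤ 0 for all i = 3, 4, ..., n. -/

import Mathlib

open Polynomial

/-- Coefficients indexed by the integers. -/
noncomputable def cz (g : Polynomial ℝ) (k : ℤ) : ℝ := if 0 ≤ k then g.coeff k.toNat else 0

/-- Nonnegativity of the entries and of the 2x2 minors of the Hurwitz matrix. -/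
def HP (g : Polynomial ℝ) : Prop :=
  (∀ k, 0 ≤ cz g k) ∧
    ∀ (x : ℤ) (d e : ℕ), cz g x * cz g (x + d + 2 * e) ≤ cz g (x + d) * cz g (x + 2 * e)

lemma cz_nat (g : Polynomial ℝ) (k : ℕ) : cz g k = g.coeff k := by simp [cz]

lemma cz_X_mul (g : Polynomial ℝ) (k : ℤ) : cz (X * g) k = cz g (k - 1) := by
  unfold cz
  by_cases h : 0 ≤ k
  · obtain ⟨m, rfl⟩ := Int.eq_ofNat_of_zero_le h
    cases m with
    | zero => simp
    | succ m =>
      have : (((m + 1 : ℕ) : ℤ) - 1) = m := by push_cast; ring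
      rw [this]
      simp [coeff_X_mul]
      intro h; omega
  · rw [if_neg h, if_neg (by omega)]

lemma cz_mul (g : Polynomial ℝ) (u v w : ℝ) (k : ℤ) :
    cz ((C u * X ^ 2 + C v * X + C w) * g) k
      = w * cz g k + v * cz g (k - 1) + u * cz g (k - 2) := by
  have hadd : ∀ p q : Polynomial ℝ, cz (p + q) k = cz p k + cz q k := by
    intro p q; unfold cz; split_ifs <;> simp
  have hC : ∀ (a : ℝ) (q : Polynomial ℝ), cz (C a * q) k = a * cz q k := by
    intro p q; unfold cz; split_ifs <;> simp
  have : (C u * X ^ 2 + C v * X + C w) * g = C u * (X * (X * g)) + C v * (X * g) + C w * g := by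
    ring
  rw [this, hadd, hadd, hC, hC, hC, cz_X_mul, cz_X_mul, cz_X_mul]
  rw [show k - 1 - 1 = k - 2 by ring]
  ring

lemma HP_mul (g : Polynomial ℝ) (u v w : ℝ) (hu : 0 ≤ u) (hv : 0 ≤ v) (hw : 0 ≤ w)
    (hg : HP g) : HP ((C u * X ^ 2 + C v * X + C w) * g) := by
  obtain ⟨h0, h⟩ := hg
  refine ⟨fun k => ?_, fun x d e => ?_⟩
  · rw [cz_mul]
    have := h0 k
    have := h0 (k - 1)
    have := h0 (k - 2)
    positivity
  have H : ∀ (y z s t : ℤ) (d e : ℕ), z = y + d + 2 * e → s = y + d → t = y + 2 * e →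
      0 ≤ cz g s * cz g t - cz g y * cz g z := by
    rintro y z s t d e rfl rfl rfl
    linarith [h y d e]
  rcases Nat.eq_zero_or_pos d with rfl | hd
  · simp only [Nat.cast_zero, add_zero, le_refl]
  rcases Nat.eq_zero_or_pos e with rfl | he
  · simp only [Nat.cast_zero, mul_zero, add_zero]
    exact (mul_comm _ _).le
  simp only [cz_mul]
  set z : ℤ := x + d + 2 * e with hz
  set s : ℤ := x + d with hs
  set t : ℤ := x + 2 * e with ht
  have w2 := mul_nonneg (mul_nonneg hw hw) (H x z s t d e (by omega) (by omega) (by omega))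
  have v2 := mul_nonneg (mul_nonneg hv hv)
    (H (x - 1) (z - 1) (s - 1) (t - 1) d e (by omega) (by omega) (by omega))
  have u2 := mul_nonneg (mul_nonneg hu hu)
    (H (x - 2) (z - 2) (s - 2) (t - 2) d e (by omega) (by omega) (by omega))
  have wv1 := mul_nonneg (mul_nonneg hw hv)
    (H (x - 1) z s (t - 1) (d + 1) e (by omega) (by omega) (by omega))
  have wv2 := mul_nonneg (mul_nonneg hw hv)
    (H x (z - 1) (s - 1) t (d - 1) e (by omega) (by omega) (by omega))
  have vu1 := mul_nonneg (mul_nonneg hv hu)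
    (H (x - 2) (z - 1) (s - 1) (t - 2) (d + 1) e (by omega) (by omega) (by omega))
  have vu2 := mul_nonneg (mul_nonneg hv hu)
    (H (x - 1) (z - 2) (s - 2) (t - 1) (d - 1) e (by omega) (by omega) (by omega))
  have wu1 := mul_nonneg (mul_nonneg hw hu)
    (H (x - 2) z (s - 2) t d (e + 1) (by omega) (by omega) (by omega))
  have wu2 := mul_nonneg (mul_nonneg hw hu)
    (H x (z - 2) s (t - 2) d (e - 1) (by omega) (by omega) (by omega))
  linarith

lemma HP_one : HP 1 := by
  have h1 : ∀ k : ℤ, cz 1 k = if k = 0 then 1 else 0 := by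
    intro k
    unfold cz
    rw [coeff_one]
    split_ifs <;> first | rfl | omega
  have h0 : ∀ k : ℤ, 0 ≤ cz 1 k := by
    intro k; rw [h1]; split_ifs <;> norm_num
  refine ⟨h0, fun x d e => ?_⟩
  by_cases hx : x = 0
  · by_cases hz : x + d + 2 * e = 0
    · have : d = 0 := by omega
      have : e = 0 := by omega
      subst_vars
      simp
    · rw [h1 (x + d + 2 * e), if_neg hz, mul_zero]
      exact mul_nonneg (h0 _) (h0 _)
  · rw [h1 x, if_neg hx, zero_mul]
    exact mul_nonneg (h0 _) (h0 _)

lemma HP_of_stable (m : ℕ) : ∀ g : Polynomial ℝ, g.Monic → g.natDegree = m →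
    (∀ z : ℂ, aeval z g = 0 → z.re ≤ 0) → HP g := by
  induction m using Nat.strong_induction_on with
  | _ m ih =>
  intro g hg hm hz
  rcases Nat.eq_zero_or_pos m with rfl | hpos
  · rw [hg.natDegree_eq_zero.1 hm]
    exact HP_one
  obtain ⟨z, hzr⟩ := IsAlgClosed.exists_aeval_eq_zero ℂ g
    (by
      intro hc
      have := natDegree_eq_of_degree_eq_some (n := 0) hc
      omega)
  have hre := hz z hzr
  have key : ∀ q r : Polynomial ℝ, q.Monic → 0 < q.natDegree → g = q * r → HP r := by
    intro q r hq hqd hqr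
    have hr : r.Monic := hq.of_mul_monic_left (hqr ▸ hg)
    refine ih r.natDegree ?_ r hr rfl ?_
    · rw [← hm, hqr, hq.natDegree_mul hr]; omega
    · intro y hy
      apply hz
      rw [hqr, map_mul, hy, mul_zero]
  by_cases him : z.im = 0
  · have hzz : z = algebraMap ℝ ℂ z.re := by
      apply Complex.ext <;> simp [him]
    have hroot : g.IsRoot z.re := by
      rw [hzz, aeval_algebraMap_apply] at hzr
      simpa [coe_aeval_eq_eval] using hzr
    obtain ⟨r, hr⟩ := dvd_iff_isRoot.2 hroot
    have hP := HP_mul r 0 1 (-z.re) le_rfl zero_le_one (by linarith)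
      (key _ r (monic_X_sub_C _) (by simp) hr)
    rw [hr]
    convert hP using 2
    simp [sub_eq_add_neg]
  · obtain ⟨r, hr⟩ := quadratic_dvd_of_aeval_eq_zero_im_ne_zero g hzr him
    have e1 : (X ^ 2 - C (2 * z.re) * X + C (‖z‖ ^ 2) : Polynomial ℝ)
        = C 1 * X ^ 2 + C (-(2 * z.re)) * X + C (‖z‖ ^ 2) := by
      simp [sub_eq_add_neg]
    rw [e1] at hr
    rw [hr]
    refine HP_mul r 1 _ _ zero_le_one (by linarith) (by positivity) (key _ r ?_ ?_ hr)
    · rw [Monic, leadingCoeff_quadratic one_ne_zero]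
    · rw [natDegree_quadratic one_ne_zero]; norm_num

theorem laffey_smigoc_lemma
    (n : ℕ) (ρ : ℝ) (hρ : 0 ≤ ρ) (lam : ℕ → ℂ)
    (hconj : Multiset.map (starRingEnd ℂ) ((Finset.Icc 2 n).val.map lam) =
      (Finset.Icc 2 n).val.map lam)
    (hre : ∀ i ∈ Finset.Icc 2 n, (lam i).re ≤ 0)
    (f : Polynomial ℝ) (hdeg : f.natDegree = n)
    (hf : f.map (algebraMap ℝ ℂ) = (Polynomial.X - Polynomial.C (ρ : ℂ)) *
      ∏ i ∈ Finset.Icc 2 n, (Polynomial.X - Polynomial.C (lam i)))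
    (ha1 : f.coeff (n - 1) ≤ 0) (ha2 : f.coeff (n - 2) ≤ 0) :
    ∀ i, 3 ≤ i → i ≤ n → f.coeff (n - i) ≤ 0 := by
  intro i hi3 hin
  have hroot : f.IsRoot ρ := by
    have h : (f.map (algebraMap ℝ ℂ)).eval (algebraMap ℝ ℂ ρ) = 0 := by rw [hf]; simp
    rw [eval_map_algebraMap, aeval_algebraMap_apply] at h
    simpa [coe_aeval_eq_eval] using h
  have hfm : f.Monic := by
    have : (f.map (algebraMap ℝ ℂ)).Monic := by
      rw [hf]
      exact (monic_X_sub_C _).mul (monic_prod_of_monic _ _ fun i _ => monic_X_sub_C _)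
    exact monic_of_injective (algebraMap ℝ ℂ).injective this
  obtain ⟨g, hg⟩ := dvd_iff_isRoot.2 hroot
  have hgm : g.Monic := (monic_X_sub_C ρ).of_mul_monic_left (hg ▸ hfm)
  have hgd : g.natDegree + 1 = n := by
    rw [← hdeg, hg, (monic_X_sub_C ρ).natDegree_mul hgm, natDegree_X_sub_C]; ring
  have hgmap : g.map (algebraMap ℝ ℂ) = ∏ i ∈ Finset.Icc 2 n, (X - C (lam i)) := by
    rw [hg, Polynomial.map_mul] at hf
    have e : (X - C ρ : Polynomial ℝ).map (algebraMap ℝ ℂ) = X - C (ρ : ℂ) := by simp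
    rw [e] at hf
    exact mul_left_cancel₀ (X_sub_C_ne_zero _) hf
  obtain ⟨h0, h⟩ := HP_of_stable _ g hgm rfl (by
    intro z hz
    rw [← eval_map_algebraMap, hgmap, eval_prod, Finset.prod_eq_zero_iff] at hz
    obtain ⟨j, hj, hzj⟩ := hz
    have : z = lam j := by simpa [sub_eq_zero] using hzj
    rw [this]; exact hre j hj)
  have hfc : ∀ k : ℕ, f.coeff k = cz g (k - 1) - ρ * cz g k := by
    intro k
    have := cz_mul g 0 1 (-ρ) k
    rw [cz_nat, show (C 0 * X ^ 2 + C 1 * X + C (-ρ)) * g = f by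
      rw [hg]; simp [sub_eq_add_neg]] at this
    rw [this]; ring
  have H : ∀ (y z s t : ℤ) (d e : ℕ), z = y + d + 2 * e → s = y + d → t = y + 2 * e →
      cz g y * cz g z ≤ cz g s * cz g t := by
    rintro y z s t d e rfl rfl rfl
    exact h y d e
  obtain ⟨b, hb⟩ : ∃ b : ℕ → ℝ, ∀ k, b k = cz g (n - 1 - k) := ⟨_, fun _ => rfl⟩
  have hb0 : b 0 = 1 := by
    rw [hb, show (n : ℤ) - 1 - (0 : ℕ) = (g.natDegree : ℕ) by omega, cz_nat]
    exact hgm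
  have hbn : ∀ k, 0 ≤ b k := fun k => by rw [hb]; exact h0 _
  have hfb : ∀ k, k + 1 ≤ n → f.coeff (n - (k + 1)) = b (k + 1) - ρ * b k := by
    intro k hk
    rw [hfc, hb, hb]
    rw [show ((n - (k + 1) : ℕ) : ℤ) = n - 1 - k by omega,
      show (n : ℤ) - 1 - k - 1 = n - 1 - (k + 1 : ℕ) by omega]
  have HB : ∀ x d e : ℕ, b x * b (x + d + 2 * e) ≤ b (x + d) * b (x + 2 * e) := by
    intro x d e
    simp only [hb]
    have := H (n - 1 - (x + d + 2 * e : ℕ)) (n - 1 - x) (n - 1 - (x + 2 * e : ℕ))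
      (n - 1 - (x + d : ℕ)) d e (by push_cast; ring) (by push_cast; ring) (by push_cast; ring)
    linarith
  have a1 := hfb 0 (by omega)
  have a2 := hfb 1 (by omega)
  norm_num at a1 a2
  rw [a1, hb0] at ha1
  rw [a2] at ha2
  obtain ⟨k, rfl⟩ : ∃ k, i = k + 1 := ⟨i - 1, by omega⟩
  rw [hfb k hin]
  rcases Nat.even_or_odd' k with ⟨e, rfl | rfl⟩
  · have := HB 0 1 e
    rw [hb0, show 0 + 1 + 2 * e = 2 * e + 1 by ring] at this
    simp only [zero_add, one_mul] at this
    nlinarith [hbn (2 * e)]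
  · have h1 := HB 1 1 e
    rw [show 1 + 1 + 2 * e = 2 * e + 1 + 1 by ring, show 1 + 2 * e = 2 * e + 1 by ring] at h1
    norm_num at h1
    rcases (hbn 1).eq_or_lt with hz | hz
    · have h2 := HB 0 (2 * e) 1
      rw [hb0] at h2
      norm_num at h2
      have : b 2 = 0 := le_antisymm (by rw [← hz] at ha2; linarith) (hbn 2)
      rw [this] at h2
      have := mul_nonneg hρ (hbn (2 * e + 1))
      have e3 : 2 * e + 1 + 1 = 2 * e + 2 := rfl
      rw [e3]
      linarith
    · have h3 : b 1 * b (2 * e + 1 + 1) ≤ b 1 * (ρ * b (2 * e + 1)) := by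
        have := hbn (2 * e + 1)
        have e3 : 2 * e + 1 + 1 = 2 * e + 2 := rfl
        rw [e3] at *
        nlinarith
      linarith [le_of_mul_le_mul_left h3 hz]
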